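/- Let V be a finite-dimensional complex symplectic vector space and Γ ⊆ Sp(V) a finite subgroup with V^Γ = 0. Then the graded Poisson algebra ℂ[V]^Γ has no nonzero Poisson derivation that is homogeneous of negative degree: if D is a ℂ-linear derivation of ℂ[V]^Γ with D{f,g} = {Df,g} + {f,Dg} and D(ℂ[V]^Γ_i) ⊆ ℂ[V]^Γ_{i−k} for all i, for some fixed k ≥ 1, then D = 0. -/

import Mathlib

set_option synthInstance.maxHeartbeats 1000000
set_option maxHeartbeats 1000000
open MvPolynomial

/-- `ℂ[V]` for `V = ℂ^{2n}` in Darboux coordinates indexed by `Fin n ⊕ Fin n`. -/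
abbrev Pn (n : ℕ) : Type := MvPolynomial (Fin n ⊕ Fin n) ℂ

/-- `V = ℂ^{2n}`. -/
abbrev Vn (n : ℕ) : Type := (Fin n ⊕ Fin n) → ℂ

/-- matrices acting on `V`. -/
abbrev Mn (n : ℕ) : Type := Matrix (Fin n ⊕ Fin n) (Fin n ⊕ Fin n) ℂ

/-- the general linear group of `V`. -/
abbrev GLn (n : ℕ) := Matrix.GeneralLinearGroup (Fin n ⊕ Fin n) ℂ

/-- The standard Poisson bracket on `ℂ[V]`:
`{f,g} = Σ_i (∂f/∂x_i ∂g/∂y_i − ∂f/∂y_i ∂g/∂x_i)`. -/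
noncomputable def pbracket (n : ℕ) (f g : Pn n) : Pn n :=
  ∑ i : Fin n,
    (pderiv (Sum.inl i) f * pderiv (Sum.inr i) g -
      pderiv (Sum.inr i) f * pderiv (Sum.inl i) g)

/-- Substitution of a linear change of variables: `substG n A f = f ∘ A` as polynomial
functions, i.e. `X j ↦ Σ_k A j k • X k`. -/
noncomputable def substG (n : ℕ) (A : Mn n) : Pn n →ₐ[ℂ] Pn n :=
  aeval fun j => ∑ k, A j k • X k

/-- The invariants `ℂ[V]^Γ` of a subgroup `Γ ⊆ GL(V)`. -/
noncomputable def invariants (n : ℕ) (Γ : Subgroup (GLn n)) : Subalgebra ℂ (Pn n) where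
  carrier := {f | ∀ γ ∈ Γ, substG n ((γ : GLn n) : Mn n) f = f}
  mul_mem' := fun {a b} ha hb γ hγ => by rw [map_mul, ha γ hγ, hb γ hγ]
  one_mem' := fun γ hγ => map_one _
  add_mem' := fun {a b} ha hb γ hγ => by rw [map_add, ha γ hγ, hb γ hγ]
  zero_mem' := fun γ hγ => map_zero _
  algebraMap_mem' := fun c γ hγ => (substG n ((γ : GLn n) : Mn n)).commutes c

theorem ext_derivation {A S : Type} [CommRing A] [CommRing S] [IsDomain A] [IsDomain S]
    [Algebra ℂ A] [Algebra ℂ S] [Algebra A S] [IsScalarTower ℂ A S]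
    (hinj : Function.Injective (algebraMap A S)) (hint : Algebra.IsIntegral A S)
    (D : Derivation ℂ A A) :
    ∃ E : Derivation ℂ S (FractionRing S), ∀ a : A,
      E (algebraMap A S a) = algebraMap S (FractionRing S) (algebraMap A S (D a)) := by
  classical
  have : FaithfulSMul A S := (faithfulSMul_iff_algebraMap_injective A S).2 hinj
  have : FaithfulSMul A (FractionRing S) := FaithfulSMul.trans A S (FractionRing S)
  let _ : Algebra (FractionRing A) (FractionRing S) := FractionRing.liftAlgebra A (FractionRing S)
  have : IsScalarTower A (FractionRing A) (FractionRing S) := inferInstance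
  have : Algebra.IsAlgebraic A S := inferInstance
  have : Algebra.IsAlgebraic (FractionRing A) (FractionRing S) :=
    isAlgebraic_of_isFractionRing A S _ _
  have : CharZero (FractionRing A) :=
    (RingHom.charZero_iff (algebraMap ℂ (FractionRing A)).injective).1 inferInstance
  have : Algebra.FormallyEtale (FractionRing A) (FractionRing S) :=
    Algebra.FormallyEtale.of_isSeparable _ _
  have : Algebra.FormallyEtale A (FractionRing A) :=
    Algebra.FormallyEtale.of_isLocalization (nonZeroDivisors A)
  have : Algebra.FormallyEtale A (FractionRing S) :=
    Algebra.FormallyEtale.comp A (FractionRing A) (FractionRing S)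
  let D' : Derivation ℂ A (FractionRing S) :=
    (Algebra.linearMap A (FractionRing S)).compDer D
  let e := KaehlerDifferential.tensorKaehlerEquivOfFormallyEtale ℂ A (FractionRing S)
  let F : Derivation ℂ (FractionRing S) (FractionRing S) :=
    ((D'.liftKaehlerDifferential.liftBaseChange (FractionRing S)).comp e.symm.toLinearMap).compDer
      (KaehlerDifferential.D ℂ (FractionRing S))
  refine ⟨F.compAlgebraMap S, fun a => ?_⟩
  have h1 := KaehlerDifferential.tensorKaehlerEquivOfFormallyEtale_symm_D_algebraMap ℂ A
    (FractionRing S) a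
  simp only [Derivation.compAlgebraMap_apply]
  rw [← IsScalarTower.algebraMap_apply, ← IsScalarTower.algebraMap_apply]
  simp [F, e, h1, D']

theorem der_eval {S M : Type} [CommRing S] [Algebra ℂ S] [AddCommGroup M] [Module S M] [Module ℂ M]
    (E : Derivation ℂ S M) (t : S) (p : Polynomial S) :
    E (p.eval t) = (p.sum fun i a => t ^ i • E a) + (Polynomial.derivative p).eval t • E t := by
  induction p using Polynomial.induction_on' with
  | add p q hp hq =>
    rw [Polynomial.sum_add_index _ _ _ (by simp) (by simp), Polynomial.eval_add, map_add, hp, hq,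
      Polynomial.derivative_add, Polynomial.eval_add, add_smul]
    abel
  | monomial i a =>
    rw [Polynomial.sum_monomial_index _ _ (by simp), Polynomial.eval_monomial, Derivation.leibniz,
      Derivation.leibniz_pow, Polynomial.derivative_monomial, Polynomial.eval_monomial, add_comm]
    congr 1
    simp only [← Nat.cast_smul_eq_nsmul S, smul_smul]
    ring_nf

theorem substG_X (n : ℕ) (A : Mn n) (j) : substG n A (X j) = ∑ k, A j k • X k := by
  simp [substG]

theorem substG_one (n : ℕ) (f : Pn n) : substG n 1 f = f := by
  have : substG n 1 = AlgHom.id ℂ _ := by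
    ext1 j
    rw [substG_X]
    simp [Matrix.one_apply]
  rw [this]; rfl

theorem substG_mul (n : ℕ) (A B : Mn n) (f : Pn n) :
    substG n B (substG n A f) = substG n (A * B) f := by
  have : (substG n B).comp (substG n A) = substG n (A * B) := by
    ext1 j
    simp only [AlgHom.comp_apply, substG_X, map_sum, map_smul, Matrix.mul_apply, Finset.smul_sum,
      Finset.sum_smul, smul_smul]
    rw [Finset.sum_comm]
  rw [← this]; rfl

/-- The orbit polynomial. -/
noncomputable def orbP (n : ℕ) (Γ : Subgroup (GLn n)) [Fintype Γ] (t : Pn n) :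
    Polynomial (Pn n) :=
  ∏ γ : Γ, (Polynomial.X - Polynomial.C (substG n ((γ : GLn n) : Mn n) t))

theorem orbP_coeff (n : ℕ) (Γ : Subgroup (GLn n)) [Fintype Γ] (t : Pn n) (i : ℕ) :
    (orbP n Γ t).coeff i ∈ invariants n Γ := by
  intro δ hδ
  have : (orbP n Γ t).map (substG n ((δ : GLn n) : Mn n)).toRingHom = orbP n Γ t := by
    simp only [orbP, Polynomial.map_prod, Polynomial.map_sub, Polynomial.map_X, Polynomial.map_C]
    refine Fintype.prod_equiv (Equiv.mulRight (⟨δ, hδ⟩ : Γ)) _ _ fun γ => ?_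
    simp [substG_mul]
  conv_rhs => rw [← this]
  rw [Polynomial.coeff_map]
  rfl

theorem inv_integral (n : ℕ) (Γ : Subgroup (GLn n)) [Fintype Γ] :
    Algebra.IsIntegral (invariants n Γ) (Pn n) := by
  refine ⟨fun t => ?_⟩
  have hm : (orbP n Γ t).Monic := Polynomial.monic_prod_of_monic _ _ fun γ _ =>
    Polynomial.monic_X_sub_C _
  have hl : orbP n Γ t ∈ Polynomial.lifts (algebraMap (invariants n Γ) (Pn n)) := by
    rw [Polynomial.lifts_iff_coeff_lifts]
    intro i
    exact ⟨⟨_, orbP_coeff n Γ t i⟩, rfl⟩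
  obtain ⟨q, hq, -, hqm⟩ := Polynomial.lifts_and_degree_eq_and_monic hl hm
  refine ⟨q, hqm, ?_⟩
  rw [← Polynomial.eval_map, hq, orbP, Polynomial.eval_prod]
  refine Finset.prod_eq_zero (Finset.mem_univ (1 : Γ)) ?_
  simp [substG_one]

theorem key (n : ℕ) (Γ : Subgroup (GLn n)) [Fintype Γ] [DecidableEq Γ]
    {M : Type} [AddCommGroup M] [Module (Pn n) M] [Module ℂ M]
    (E : Derivation ℂ (Pn n) M) (N : Submodule (Pn n) M)
    (h : ∀ a ∈ invariants n Γ, E a ∈ N) (t : Pn n) :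
    (∏ γ ∈ (Finset.univ : Finset Γ).erase 1, (t - substG n ((γ : GLn n) : Mn n) t)) • E t ∈ N := by
  have h1 := der_eval E t (orbP n Γ t)
  have hP : orbP n Γ t = (Polynomial.X - Polynomial.C t) *
      ∏ γ ∈ (Finset.univ : Finset Γ).erase 1,
        (Polynomial.X - Polynomial.C (substG n ((γ : GLn n) : Mn n) t)) := by
    rw [orbP, ← Finset.mul_prod_erase _ _ (Finset.mem_univ (1 : Γ))]
    simp [substG_one]
  have h0 : (orbP n Γ t).eval t = 0 := by rw [hP]; simp
  have h2 : (Polynomial.derivative (orbP n Γ t)).eval t =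
      ∏ γ ∈ (Finset.univ : Finset Γ).erase 1, (t - substG n ((γ : GLn n) : Mn n) t) := by
    rw [hP, Polynomial.derivative_mul]
    simp [Polynomial.eval_prod]
  rw [h0, map_zero, h2] at h1
  rw [← neg_eq_of_add_eq_zero_right h1.symm]
  refine N.neg_mem (Submodule.sum_mem _ fun i _ => N.smul_mem _ (h _ (orbP_coeff n Γ t i)))

theorem no_refl (n : ℕ) (A : Mn n) (hA : A ∈ Matrix.symplecticGroup (Fin n) ℂ) (m : ℕ) (hm : m ≠ 0)
    (hAm : A ^ m = 1) (π : Pn n) (hπ : Prime π)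
    (hd : ∀ j, π ∣ X j - substG n A (X j)) : A = 1 := by
  have hdeg : π.totalDegree ≠ 0 := by
    intro h0
    rw [totalDegree_eq_zero_iff_eq_C] at h0
    refine hπ.not_isUnit ?_
    rw [h0]
    refine IsUnit.map C (isUnit_iff_ne_zero.2 fun h => hπ.ne_zero ?_)
    rw [h0, h, C_0]
  have hc : ∀ j, ∃ c : ℂ, X j - substG n A (X j) = C c * π := by
    intro j
    obtain ⟨q, hq⟩ := hd j
    by_cases hq0 : q = 0
    · exact ⟨0, by simp [hq, hq0]⟩
    have h1 : (X j - substG n A (X j)).totalDegree ≤ 1 := by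
      refine (totalDegree_sub _ _).trans (max_le (by simp) ?_)
      rw [substG_X]
      refine totalDegree_finsetSum_le fun k _ => (totalDegree_smul_le _ _).trans (by simp)
    rw [hq, totalDegree_mul_of_isDomain hπ.ne_zero hq0] at h1
    have h2 : q.totalDegree = 0 := by omega
    rw [totalDegree_eq_zero_iff_eq_C] at h2
    exact ⟨q.coeff 0, by rw [hq, ← h2, mul_comm]⟩
  choose c hc using hc
  set l : Vn n := fun k => - coeff (Finsupp.single k 1) π with hl
  have hAe : A = 1 + Matrix.vecMulVec c l := by
    ext j k
    have h1 := congrArg (coeff (Finsupp.single k 1)) (hc j)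
    rw [substG_X, coeff_sub, coeff_C_mul, coeff_sum] at h1
    simp only [coeff_smul, coeff_X, Finsupp.single_left_inj one_ne_zero] at h1
    simp [Matrix.vecMulVec_apply, hl, Matrix.one_apply] at h1 ⊢
    linear_combination -h1
  have hdet := SymplecticGroup.det_eq_one hA
  have hlc : l ⬝ᵥ c = 0 := by
    rw [hAe, Matrix.vecMulVec_eq Unit, Matrix.det_one_add_replicateCol_mul_replicateRow] at hdet
    linear_combination hdet
  have hsq : Matrix.vecMulVec c l * Matrix.vecMulVec c l = 0 := by
    rw [Matrix.vecMulVec_mul_vecMulVec, hlc]; simp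
  have hpow : ∀ m : ℕ, A ^ m = 1 + (m : ℂ) • Matrix.vecMulVec c l := by
    intro m
    induction m with
    | zero => simp
    | succ m ih =>
      rw [pow_succ, ih]
      conv_lhs => rw [hAe]
      rw [add_mul, mul_add, mul_add, Matrix.smul_mul, Matrix.smul_mul, hsq]
      push_cast
      rw [add_smul]
      simp
      abel
  have h3 := hpow m
  rw [hAm, left_eq_add, smul_eq_zero] at h3
  rw [hAe, h3.resolve_left (by exact_mod_cast hm), add_zero]

theorem spans (n : ℕ) (Γ : Subgroup (GLn n)) [Fintype Γ]
    (hsp : ∀ γ ∈ Γ, ((γ : GLn n) : Mn n) ∈ Matrix.symplecticGroup (Fin n) ℂ)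
    {M : Type} [AddCommGroup M] [Module (Pn n) M] [Module ℂ M] [IsScalarTower ℂ (Pn n) M]
    (E : Derivation ℂ (Pn n) M) (N : Submodule (Pn n) M)
    (h : ∀ a ∈ invariants n Γ, E a ∈ N) (π : Pn n) (hπ : Prime π) (j : Fin n ⊕ Fin n) :
    ∃ c : Pn n, ¬ π ∣ c ∧ c • E (X j) ∈ N := by
  classical
  let lin : Vn n →ₗ[ℂ] Pn n := Fintype.linearCombination ℂ X
  have hlin : ∀ j, lin (Pi.single j 1) = X j := by
    intro j; simp [lin]
  let U : Submodule ℂ (Vn n) :=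
    { carrier := {v | ∃ c : Pn n, ¬ π ∣ c ∧ c • E (lin v) ∈ N}
      zero_mem' := ⟨1, hπ.not_dvd_one, by simp⟩
      add_mem' := by
        rintro v w ⟨c, hc, hc'⟩ ⟨d, hd, hd'⟩
        refine ⟨c * d, fun h => (hπ.dvd_or_dvd h).elim hc hd, ?_⟩
        rw [map_add, map_add, smul_add]
        refine N.add_mem ?_ ?_
        · rw [mul_comm, mul_smul]; exact N.smul_mem _ hc'
        · rw [mul_smul]; exact N.smul_mem _ hd'
      smul_mem' := by
        rintro r v ⟨c, hc, hc'⟩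
        refine ⟨c, hc, ?_⟩
        rw [map_smul, Derivation.map_smul, ← algebraMap_smul (Pn n) r (E (lin v)), smul_comm]
        exact N.smul_mem _ hc' }
  let W : Γ → Submodule ℂ (Vn n) := fun γ =>
    (((Ideal.span {π}).restrictScalars ℂ).comap
      (LinearMap.id - (substG n ((γ : GLn n) : Mn n)).toLinearMap)).comap lin
  have hW : ∀ γ v, v ∈ W γ ↔ π ∣ lin v - substG n ((γ : GLn n) : Mn n) (lin v) := by
    intro γ v
    simp [W, Ideal.mem_span_singleton]
  have hWt : ∀ γ : Γ, γ ≠ 1 → W γ ≠ ⊤ := by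
    intro γ hγ htop
    apply hγ
    have := no_refl n ((γ : GLn n) : Mn n) (hsp _ γ.2) (orderOf γ) (orderOf_pos γ).ne'
      (by
        have h1 := congrArg (fun g : Γ => ((g : GLn n) : Mn n)) (pow_orderOf_eq_one γ)
        simpa only [Subgroup.coe_pow, Units.val_pow_eq_pow_val, Subgroup.coe_one, Units.val_one]
          using h1) π hπ (by
        intro j
        rw [← hlin j, ← hW, htop]; trivial)
    ext1; ext1; simpa using this
  suffices hU : U = ⊤ by
    have : (Pi.single j 1 : Vn n) ∈ U := by rw [hU]; trivial
    obtain ⟨c, hc, hc'⟩ := this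
    rw [hlin] at hc'
    exact ⟨c, hc, hc'⟩
  by_contra hU
  have hs : (⊤ : Subspace ℂ (Vn n)) ∉ insert U (((Finset.univ : Finset Γ).erase 1).image W) := by
    simp only [Finset.mem_insert, Finset.mem_image, Finset.mem_erase, not_or]
    refine ⟨fun h => hU h.symm, ?_⟩
    rintro ⟨γ, ⟨hγ, -⟩, h⟩
    exact hWt γ hγ h
  have := Subspace.biUnion_ne_univ_of_top_notMem hs
  obtain ⟨v, hv⟩ := (Set.ne_univ_iff_exists_notMem _).1 this
  simp only [Set.mem_iUnion, not_exists] at hv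
  refine hv U (Finset.mem_insert_self _ _) ⟨_, ?_, key n Γ E N h (lin v)⟩
  rw [hπ.dvd_finsetProd_iff]
  rintro ⟨γ, hγ, hd⟩
  exact hv (W γ) (Finset.mem_insert_of_mem (Finset.mem_image_of_mem _ hγ)) ((hW γ v).2 hd)

theorem uniq (n : ℕ) (Γ : Subgroup (GLn n)) [Fintype Γ]
    (hsp : ∀ γ ∈ Γ, ((γ : GLn n) : Mn n) ∈ Matrix.symplecticGroup (Fin n) ℂ)
    (E : Derivation ℂ (Pn n) (Pn n)) (h : ∀ a ∈ invariants n Γ, E a = 0) : E = 0 := by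
  refine MvPolynomial.derivation_ext fun j => ?_
  obtain ⟨c, hc, hc'⟩ := spans n Γ hsp E ⊥ (by simpa using h) (X j) X_prime j
  rw [Submodule.mem_bot, smul_eq_mul, mul_eq_zero] at hc'
  refine hc'.resolve_left ?_
  rintro rfl
  exact hc (dvd_zero _)

theorem exists_lift (n : ℕ) (Γ : Subgroup (GLn n)) [Fintype Γ]
    (hsp : ∀ γ ∈ Γ, ((γ : GLn n) : Mn n) ∈ Matrix.symplecticGroup (Fin n) ℂ)
    (D : Derivation ℂ (invariants n Γ) (invariants n Γ)) :
    ∃ E : Derivation ℂ (Pn n) (Pn n), ∀ a : invariants n Γ, E (a : Pn n) = (D a : Pn n) := by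
  obtain ⟨F, hF⟩ := ext_derivation (A := invariants n Γ) (S := Pn n)
    Subtype.val_injective (inv_integral n Γ) D
  have hr : ∀ j, ∃ a : Pn n, algebraMap (Pn n) (FractionRing (Pn n)) a = F (X j) := by
    intro j
    set z := F (X j) with hz
    have hu : IsUnit (IsFractionRing.den (Pn n) z : Pn n) := by
      by_contra hu
      obtain ⟨π, hπ, hdvd⟩ := WfDvdMonoid.exists_irreducible_factor hu
        (nonZeroDivisors.ne_zero (IsFractionRing.den (Pn n) z).2)
      have hp := hπ.prime
      obtain ⟨c, hc, hc'⟩ := spans n Γ hsp F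
        (LinearMap.range (Algebra.linearMap (Pn n) (FractionRing (Pn n))))
        (fun a ha => ⟨_, (hF ⟨a, ha⟩).symm⟩) π hp j
      obtain ⟨s, hs⟩ := hc'
      have hmk := IsFractionRing.mk'_num_den (Pn n) z
      rw [IsLocalization.mk'_eq_iff_eq_mul] at hmk
      have h1 : c * IsFractionRing.num (Pn n) z = s * (IsFractionRing.den (Pn n) z : Pn n) := by
        apply IsFractionRing.injective (Pn n) (FractionRing (Pn n))
        rw [map_mul, map_mul, hmk, ← mul_assoc]
        congr 1
        rw [← Algebra.smul_def]
        exact hs.symm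
      have h2 : π ∣ c * IsFractionRing.num (Pn n) z := h1 ▸ hdvd.mul_left s
      rcases hp.dvd_or_dvd h2 with h3 | h3
      · exact hc h3
      · exact hp.not_isUnit (IsFractionRing.num_den_reduced (Pn n) z h3 hdvd)
    exact IsFractionRing.isInteger_of_isUnit_den hu
  choose a ha using hr
  refine ⟨mkDerivation ℂ a, fun f => ?_⟩
  have : (Algebra.linearMap (Pn n) (FractionRing (Pn n))).compDer (mkDerivation ℂ a) = F := by
    refine MvPolynomial.derivation_ext fun j => ?_
    simp [ha]
  apply IsFractionRing.injective (Pn n) (FractionRing (Pn n))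
  have h2 := congrArg (fun G => G (f : Pn n)) this
  exact h2.trans (hF f)

theorem substG_hom (n : ℕ) (A : Mn n) (f : Pn n) (i : ℕ) (hf : f.IsHomogeneous i) :
    (substG n A f).IsHomogeneous i := by
  have := hf.aeval (fun j => ∑ k, A j k • (X k : Pn n)) (n := 1) (fun j =>
    IsHomogeneous.sum _ _ _ fun k _ => by
      rw [smul_eq_C_mul]
      simpa using (isHomogeneous_C _ (A j k)).mul (isHomogeneous_X ℂ k))
  simpa [substG] using this

theorem comp_inv (n : ℕ) (Γ : Subgroup (GLn n)) (f : Pn n) (hf : f ∈ invariants n Γ) (i : ℕ) :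
    homogeneousComponent i f ∈ invariants n Γ := by
  intro γ hγ
  have h1 := hf γ hγ
  conv_rhs => rw [← h1, ← sum_homogeneousComponent f]
  rw [map_sum, map_sum]
  by_cases hi : i ∈ Finset.range (f.totalDegree + 1)
  · rw [Finset.sum_eq_single_of_mem i hi]
    · rw [homogeneousComponent_of_mem (substG_hom n _ _ i (homogeneousComponent_isHomogeneous i f)),
        if_pos rfl]
    · intro j _ hj
      rw [homogeneousComponent_of_mem (substG_hom n _ _ j (homogeneousComponent_isHomogeneous j f)),
        if_neg hj.symm]
  · rw [homogeneousComponent_eq_zero i f (by simpa using hi), map_zero, Finset.sum_eq_zero]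
    intro j hj
    rw [homogeneousComponent_of_mem (substG_hom n _ _ j (homogeneousComponent_isHomogeneous j f)),
        if_neg]
    rintro rfl
    exact hi hj

/-- The Euler derivation. -/
noncomputable def eul (n : ℕ) : Derivation ℂ (Pn n) (Pn n) := mkDerivation ℂ X

theorem eul_monomial (n : ℕ) (m : (Fin n ⊕ Fin n) →₀ ℕ) (r : ℂ) :
    eul n (monomial m r) = (m.degree : ℂ) • monomial m r := by
  have h := (isHomogeneous_monomial (σ := Fin n ⊕ Fin n) r (rfl : m.degree = m.degree)).sum_X_mul_pderiv
  have hsum : ∀ f : Pn n, (∑ i, (X i : Pn n) • pderiv (R := ℂ) i) f = ∑ i, X i * pderiv i f := by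
    intro f
    have h3 := congrFun (map_sum (Derivation.coeFnAddMonoidHom (R := ℂ) (A := Pn n) (M := Pn n))
      (fun i => (X i : Pn n) • pderiv (R := ℂ) i) Finset.univ) f
    simpa using h3
  have h2 : eul n = ∑ i, (X i : Pn n) • pderiv i := by
    refine MvPolynomial.derivation_ext fun j => ?_
    rw [hsum]
    simp [eul, pderiv_X, Pi.single_apply]
  rw [h2, hsum, Nat.cast_smul_eq_nsmul]
  simpa using h

theorem eul_coeff (n : ℕ) (f : Pn n) (m : (Fin n ⊕ Fin n) →₀ ℕ) :
    coeff m (eul n f) = (m.degree : ℂ) * coeff m f := by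
  induction f using MvPolynomial.induction_on' with
  | monomial u a =>
    rw [eul_monomial, coeff_smul, coeff_monomial]
    split_ifs with h
    · simp [h]
    · simp
  | add p q hp hq => rw [map_add, coeff_add, coeff_add, hp, hq, mul_add]

theorem eul_hom (n : ℕ) (f : Pn n) (i : ℕ) (hf : f.IsHomogeneous i) :
    eul n f = (i : ℂ) • f := by
  ext m
  rw [eul_coeff, coeff_smul, smul_eq_mul]
  by_cases h : coeff m f = 0
  · simp [h]
  · have := hf h
    rw [← this, Finsupp.degree_eq_weight_one]; rfl

theorem chain (n : ℕ) (A : Mn n) (c : Vn n) (f : Pn n) :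
    substG n A (mkDerivation ℂ (fun j => (C (A.mulVec c j) : Pn n)) f) =
      mkDerivation ℂ (fun j => (C (c j) : Pn n)) (substG n A f) := by
  induction f using MvPolynomial.induction_on with
  | C r => simp [← algebraMap_eq]
  | add p q hp hq => simp only [map_add, hp, hq]
  | mul_X p j hp =>
    have : (C (A.mulVec c j) : Pn n) =
        mkDerivation ℂ (fun j => (C (c j) : Pn n)) (substG n A (X j)) := by
      rw [substG_X]
      simp [Matrix.mulVec, dotProduct, smul_eq_C_mul]
    have h2 : substG n A (C (A.mulVec c j) : Pn n) = C (A.mulVec c j) := by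
      rw [← algebraMap_eq, AlgHom.commutes]
    rw [Derivation.leibniz, map_mul, Derivation.leibniz, map_add, smul_eq_mul, smul_eq_mul,
      smul_eq_mul, smul_eq_mul, map_mul, map_mul, hp, mkDerivation_X, h2, this]

/-- for a finite subgroup `Γ ⊆ Sp(V)` with `V^Γ = 0`, the graded Poisson
algebra `ℂ[V]^Γ` (bracket of degree `-2`) has no nonzero Poisson derivation homogeneous of
negative degree `-k`, `k ≥ 1`. -/
theorem invariants_no_negative_poisson_derivation
    (n : ℕ) (Γ : Subgroup (GLn n)) (hfin : Finite Γ)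
    (hsp : ∀ γ ∈ Γ, ((γ : GLn n) : Mn n) ∈ Matrix.symplecticGroup (Fin n) ℂ)
    (hfix : ∀ v : Vn n, (∀ γ ∈ Γ, Matrix.mulVec ((γ : GLn n) : Mn n) v = v) → v = 0)
    (k : ℕ) (hk : 1 ≤ k)
    (D : invariants n Γ →ₗ[ℂ] invariants n Γ)
    -- `D` is a derivation
    (hder : ∀ f g : invariants n Γ, D (f * g) = f * D g + D f * g)
    -- `D` is a Poisson derivation for the restricted bracket
    (hpois : ∀ f g b : invariants n Γ, (b : Pn n) = pbracket n (f : Pn n) (g : Pn n) →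
      ((D b : invariants n Γ) : Pn n)
        = pbracket n ((D f : invariants n Γ) : Pn n) (g : Pn n)
          + pbracket n (f : Pn n) ((D g : invariants n Γ) : Pn n))
    -- `D` is homogeneous of degree `-k`
    (hhom : ∀ (i : ℕ) (f : invariants n Γ), (f : Pn n).IsHomogeneous i →
      (k ≤ i → ((D f : invariants n Γ) : Pn n).IsHomogeneous (i - k)) ∧ (i < k → D f = 0)) :
    D = 0 := by
  classical
  have := Fintype.ofFinite Γ
  let D' : Derivation ℂ (invariants n Γ) (invariants n Γ) := Derivation.mk' D (by
    intro a b
    rw [hder, smul_eq_mul, smul_eq_mul, mul_comm (D a) b])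
  obtain ⟨E, hE⟩ := exists_lift n Γ hsp D'
  replace hE : ∀ a : invariants n Γ, E (a : Pn n) = (D a : Pn n) := hE
  -- homogeneity of the lift
  have hcomm : ⁅eul n, E⁆ + (k : ℂ) • E = 0 := by
    refine uniq n Γ hsp _ fun f hf => ?_
    rw [← sum_homogeneousComponent f, map_sum]
    refine Finset.sum_eq_zero fun i _ => ?_
    have hg := comp_inv n Γ f hf i
    have hh := homogeneousComponent_isHomogeneous i f
    generalize homogeneousComponent i f = g at hg hh
    obtain ⟨h1, h2⟩ := hhom i ⟨g, hg⟩ hh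
    have hEg := hE ⟨g, hg⟩
    simp only at hEg
    rw [Derivation.add_apply, Derivation.smul_apply, Derivation.commutator_apply,
      eul_hom n g i hh, Derivation.map_smul]
    rcases le_or_gt k i with hki | hki
    · rw [hEg, eul_hom n _ _ (h1 hki), Nat.cast_sub hki]
      module
    · rw [hEg, h2 hki]
      simp
  have hconst : ∀ j, ∃ c : ℂ, E (X j) = C c := by
    intro j
    refine ⟨coeff 0 (E (X j)), ?_⟩
    have h1 := congrArg (fun G => G (X j : Pn n)) hcomm
    simp only [Derivation.add_apply, Derivation.smul_apply, Derivation.commutator_apply,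
      Derivation.zero_apply] at h1
    rw [eul_hom n (X j) 1 (isHomogeneous_X _ _)] at h1
    ext m
    have h2 := congrArg (coeff m) h1
    rw [coeff_C]
    split_ifs with hm
    · rw [hm]
    · have hd : m.degree ≠ 0 := fun h => hm ((Finsupp.degree_eq_zero_iff m).1 h).symm
      simp only [Nat.cast_one, one_smul, coeff_add, coeff_sub, coeff_smul, coeff_zero,
        eul_coeff, smul_eq_mul] at h2
      have h3 : ((m.degree + k - 1 : ℕ) : ℂ) * coeff m (E (X j)) = 0 := by
        rw [Nat.cast_sub (by omega)]
        push_cast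
        linear_combination h2
      refine (mul_eq_zero.1 h3).resolve_left ?_
      exact Nat.cast_ne_zero.2 (by omega)
  choose c hc using hconst
  have hEc : E = mkDerivation ℂ (fun j => (C (c j) : Pn n)) := by
    refine MvPolynomial.derivation_ext fun j => ?_
    simp [hc]
  have hc0 : c = 0 := by
    refine hfix c fun γ hγ => ?_
    have hz := uniq n Γ hsp
      (mkDerivation ℂ (fun j => (C (((γ : GLn n) : Mn n).mulVec c j) : Pn n)) - E) (by
        intro f hf
        rw [Derivation.sub_apply, sub_eq_zero]
        have h1 := chain n ((γ : GLn n) : Mn n) c f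
        rw [hf γ hγ, ← hEc] at h1
        have h2 : E f ∈ invariants n Γ := by
          rw [hE ⟨f, hf⟩]; exact (D ⟨f, hf⟩).2
        rw [← h2 γ hγ] at h1
        have h3 := congrArg (substG n ((γ⁻¹ : GLn n) : Mn n)) h1
        have h4 : ((γ : GLn n) : Mn n) * ((γ⁻¹ : GLn n) : Mn n) = 1 := Units.mul_inv γ
        rwa [substG_mul, substG_mul, h4, substG_one, substG_one] at h3)
    funext j
    have h5 := congrArg (fun G => G (X j : Pn n)) hz
    simp only [Derivation.sub_apply, mkDerivation_X, hc, Derivation.zero_apply, sub_eq_zero] at h5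
    exact C_injective _ _ h5
  ext f : 2
  rw [← hE f, hEc, hc0]
  have : (fun j => (C ((0 : Vn n) j) : Pn n)) = 0 := by funext j; simp
  rw [this]
  have hz : mkDerivation ℂ (0 : (Fin n ⊕ Fin n) → Pn n) = 0 :=
    MvPolynomial.derivation_ext fun j => by simp
  rw [hz]
  simp
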